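/- Let G be a group generated by a finite set S and let H_1, H_2 be stable subgroups of G. Then H_1 ∩ H_2 is a stable subgroup of G. -/

import Mathlib

open Pointwise

section BasicDefs

variable {G : Type*} [Group G]

/-- The word length of `g` with respect to the generating set `S`
(words use letters from `S ∪ S⁻¹`). -/
noncomputable def wordLength (S : Set G) (g : G) : ℕ :=
  sInf {n : ℕ | ∃ l : List G, l.length = n ∧ (∀ x ∈ l, x ∈ S ∨ x⁻¹ ∈ S) ∧ l.prod = g}

/-- The word metric on `G` with respect to the generating set `S`. -/
noncomputable def wordDist (S : Set G) (g h : G) : ℝ :=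
  (wordLength S (g⁻¹ * h) : ℝ)

/-- The closed `r`-neighborhood of a subset `A` with respect to the word metric `d_S`. -/
def nbhd (S : Set G) (r : ℝ) (A : Set G) : Set G :=
  {g : G | ∃ a ∈ A, wordDist S g a ≤ r}

/-- The distance between two subsets: the infimum of distances between their elements. -/
noncomputable def setDist (S : Set G) (A B : Set G) : ℝ :=
  sInf {r : ℝ | ∃ a ∈ A, ∃ b ∈ B, r = wordDist S a b}

/-- The conjugate subgroup `H^g = g H g⁻¹`. -/
def conjSub (g : G) (H : Subgroup G) : Subgroup G :=
  H.map (MulAut.conj g).toMonoidHom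

end BasicDefs

/-- `γ` restricted to `{0, …, n}` is a `(K, ε)`-quasigeodesic for the distance function `d`. -/
def IsQuasigeodesic {α : Type*} (d : α → α → ℝ) (K ε : ℝ) (n : ℕ) (γ : ℕ → α) : Prop :=
  ∀ i j : ℕ, i ≤ n → j ≤ n →
    (1 / K) * |(i : ℝ) - (j : ℝ)| - ε ≤ d (γ i) (γ j) ∧
      d (γ i) (γ j) ≤ K * |(i : ℝ) - (j : ℝ)| + ε

/-- `γ` restricted to `{0, …, n}` is a geodesic for the distance function `d`. -/
def IsGeodesic {α : Type*} (d : α → α → ℝ) (n : ℕ) (γ : ℕ → α) : Prop :=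
  ∀ i j : ℕ, i ≤ n → j ≤ n → d (γ i) (γ j) = |(i : ℝ) - (j : ℝ)|

/-- The path `γ` (on `{0, …, n}`) is `f`-stable: every `(K, ε)`-quasigeodesic with endpoints
on `γ` stays in the `f K ε`-neighborhood of `γ`. -/
def IsStablePath {α : Type*} (d : α → α → ℝ) (f : ℝ → ℝ → ℝ) (n : ℕ) (γ : ℕ → α) : Prop :=
  ∀ K ε : ℝ, 1 ≤ K → 0 ≤ ε → ∀ (m : ℕ) (η : ℕ → α),
    IsQuasigeodesic d K ε m η →
    (∃ i ≤ n, η 0 = γ i) → (∃ i ≤ n, η m = γ i) →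
    ∀ j ≤ m, ∃ i ≤ n, d (η j) (γ i) ≤ f K ε

/-- The Gromov product `⟨x, y⟩_w` with respect to a distance function `d`. -/
noncomputable def gromovProd {α : Type*} (d : α → α → ℝ) (w x y : α) : ℝ :=
  (d w x + d w y - d x y) / 2

/-- Gromov hyperbolicity of a distance function, via the four-point condition. -/
def IsHyperbolicDist {α : Type*} (d : α → α → ℝ) : Prop :=
  ∃ δ : ℝ, 0 ≤ δ ∧ ∀ w x y z : α,
    min (gromovProd d w x y) (gromovProd d w y z) - δ ≤ gromovProd d w x z

section GroupDefs

variable {G : Type*} [Group G]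

/-- `H` is a stable subgroup of `(G, d_S)` with stability function `f`: `H` has a finite
generating set `T` such that the inclusion `(H, d_T) → (G, d_S)` is a quasi-isometric
embedding sending every `d_T`-geodesic to an `f`-stable quasigeodesic of `(G, d_S)`. -/
def IsStableSubgroupWith (S : Set G) (H : Subgroup G) (f : ℝ → ℝ → ℝ) : Prop :=
  ∃ T : Set H, T.Finite ∧ Subgroup.closure T = ⊤ ∧
    (∃ μ c : ℝ, 1 ≤ μ ∧ 0 ≤ c ∧ ∀ h₁ h₂ : H,
      (1 / μ) * wordDist T h₁ h₂ - c ≤ wordDist S (h₁ : G) (h₂ : G) ∧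
        wordDist S (h₁ : G) (h₂ : G) ≤ μ * wordDist T h₁ h₂ + c) ∧
    ∀ (n : ℕ) (γ : ℕ → H), IsGeodesic (wordDist T) n γ →
      (∃ K ε : ℝ, 1 ≤ K ∧ 0 ≤ ε ∧
        IsQuasigeodesic (wordDist S) K ε n (fun i => (γ i : G))) ∧
      IsStablePath (wordDist S) f n (fun i => (γ i : G))

/-- `H` is a stable subgroup of `(G, d_S)`. -/
def IsStableSubgroup (S : Set G) (H : Subgroup G) : Prop :=
  ∃ f : ℝ → ℝ → ℝ, IsStableSubgroupWith S H f

/-- The family `Q` of subgroups is hyperbolically embedded in `(G, X)`: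
(Q1) geometric separation, (Q2) finite generation, (Q3) uniform quasi-isometric embedding. -/
def IsHypEmbFamily {G : Type*} [Group G] {ι : Type*} (X : Set G) (Q : ι → Subgroup G) : Prop :=
  (∀ ε : ℝ, 0 < ε → ∃ R : ℝ, ∀ (g : G) (i j : ι),
      (∃ a ∈ (Q i : Set G) ∩ nbhd X ε (g • (Q j : Set G)),
        ∃ b ∈ (Q i : Set G) ∩ nbhd X ε (g • (Q j : Set G)), R ≤ wordDist X a b) →
      i = j ∧ g ∈ Q i) ∧
  ∃ Y : ι → Set G, (∀ i, (Y i).Finite ∧ Y i ⊆ (Q i : Set G) ∧ Subgroup.closure (Y i) = Q i) ∧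
    ∃ μ c : ℝ, 1 ≤ μ ∧ 0 ≤ c ∧ ∀ i : ι, ∀ h ∈ Q i,
      (wordLength (Y i) h : ℝ) ≤ μ * (wordLength X h : ℝ) + c

/-- The subset `H` of `G` satisfies the WPD condition in `(G, X)`. -/
def WPDSet (X : Set G) (H : Set G) : Prop :=
  ∀ ε : ℝ, 0 < ε → ∃ N : ℝ, 0 < N ∧ ∀ h₁ h₂ : G, h₁ ∈ H → h₂ ∈ H →
    N < wordDist X h₁ h₂ →
    {g : G | wordDist X h₁ (g * h₁) < ε ∧ wordDist X h₂ (g * h₂) < ε}.Finite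

/-- A quasimorphism on `G`. -/
def IsQuasimorphism (q : G → ℝ) : Prop :=
  ∃ D : ℝ, 0 ≤ D ∧ ∀ x y : G, |q (x * y) - q x - q y| ≤ D

/-- A homogeneous quasimorphism on `G`. -/
def IsHomogeneousQM (q : G → ℝ) : Prop :=
  IsQuasimorphism q ∧ ∀ (x : G) (n : ℕ), q (x ^ n) = (n : ℝ) * q x

/-- `H` is a quasiconvex subgroup of `(G, d_S)`: every geodesic with endpoints in `H`
lies in a uniformly bounded neighborhood of `H`. -/
def IsQuasiconvex (S : Set G) (H : Subgroup G) : Prop :=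
  ∃ C : ℝ, 0 ≤ C ∧ ∀ (n : ℕ) (γ : ℕ → G), IsGeodesic (wordDist S) n γ →
    γ 0 ∈ H → γ n ∈ H → ∀ i ≤ n, ∃ h ∈ H, wordDist S (γ i) h ≤ C

end GroupDefs

section Helpers

variable {G : Type*} [Group G]

/-- A word of length `n` in the letters `S ∪ S⁻¹` representing `g`. -/
def HasWord (S : Set G) (n : ℕ) (g : G) : Prop :=
  ∃ l : List G, l.length = n ∧ (∀ x ∈ l, x ∈ S ∨ x⁻¹ ∈ S) ∧ l.prod = g

theorem HasWord.mul {S : Set G} {m n : ℕ} {g h : G} (hg : HasWord S m g) (hh : HasWord S n h) :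
    HasWord S (m + n) (g * h) := by
  obtain ⟨l, rfl, hl, rfl⟩ := hg
  obtain ⟨l', rfl, hl', rfl⟩ := hh
  refine ⟨l ++ l', by simp, ?_, by simp⟩
  intro x hx
  rcases List.mem_append.1 hx with h | h
  · exact hl x h
  · exact hl' x h

theorem HasWord.one (S : Set G) : HasWord S 0 1 := ⟨[], rfl, by simp, rfl⟩

theorem HasWord.le {S : Set G} {n : ℕ} {g : G} (hg : HasWord S n g) : wordLength S g ≤ n :=
  Nat.sInf_le hg

theorem HasWord.inv {S : Set G} {n : ℕ} {g : G} (hg : HasWord S n g) : HasWord S n g⁻¹ := by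
  obtain ⟨l, rfl, hl, rfl⟩ := hg
  refine ⟨(l.map (·⁻¹)).reverse, by simp, ?_, by rw [List.prod_inv_reverse]⟩
  intro x hx
  simp only [List.mem_reverse, List.mem_map] at hx
  obtain ⟨y, hy, rfl⟩ := hx
  rw [inv_inv]
  exact (hl y hy).symm

theorem hasWord_wordLength {S : Set G} (hS : Subgroup.closure S = ⊤) (g : G) :
    HasWord S (wordLength S g) g := by
  have hne : {n : ℕ | HasWord S n g}.Nonempty := by
    have hg : g ∈ (Subgroup.closure S).toSubmonoid := by simp [hS]
    rw [Subgroup.closure_toSubmonoid] at hg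
    obtain ⟨l, hl, hp⟩ := Submonoid.exists_list_of_mem_closure hg
    exact ⟨l.length, l, rfl, hl, hp⟩
  exact Nat.sInf_mem hne

theorem wordLength_mul_le {S : Set G} (hS : Subgroup.closure S = ⊤) (g h : G) :
    wordLength S (g * h) ≤ wordLength S g + wordLength S h :=
  ((hasWord_wordLength hS g).mul (hasWord_wordLength hS h)).le

theorem wordLength_inv {S : Set G} (hS : Subgroup.closure S = ⊤) (g : G) :
    wordLength S g⁻¹ = wordLength S g := by
  apply le_antisymm
  · exact (hasWord_wordLength hS g).inv.le
  · simpa using (hasWord_wordLength hS g⁻¹).inv.le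

theorem wordLength_one (S : Set G) : wordLength S (1 : G) = 0 :=
  Nat.le_zero.1 (HasWord.one S).le

theorem wordDist_self (S : Set G) (g : G) : wordDist S g g = 0 := by
  simp [wordDist, wordLength_one]

theorem wordDist_comm' {S : Set G} (hS : Subgroup.closure S = ⊤) (g h : G) :
    wordDist S g h = wordDist S h g := by
  unfold wordDist
  rw [← wordLength_inv hS (g⁻¹ * h)]
  simp

theorem wordDist_tri {S : Set G} (hS : Subgroup.closure S = ⊤) (g h k : G) :
    wordDist S g k ≤ wordDist S g h + wordDist S h k := by
  unfold wordDist
  have := wordLength_mul_le hS (g⁻¹ * h) (h⁻¹ * k)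
  rw [show g⁻¹ * h * (h⁻¹ * k) = g⁻¹ * k by group] at this
  exact_mod_cast this

theorem finite_ball {S : Set G} (hfin : S.Finite) (hS : Subgroup.closure S = ⊤) (n : ℕ) :
    {g : G | wordLength S g ≤ n}.Finite := by
  have key : ∀ m : ℕ, {g : G | HasWord S m g}.Finite := by
    intro m
    induction m with
    | zero =>
      refine (Set.finite_singleton (1 : G)).subset ?_
      rintro g ⟨l, hl, -, rfl⟩
      simp [List.length_eq_zero_iff.1 hl]
    | succ m ih =>
      refine ((hfin.union hfin.inv).mul ih).subset ?_
      rintro g ⟨l, hl, hl', rfl⟩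
      match l, hl, hl' with
      | x :: l, hl, hl' =>
        refine Set.mem_mul.2 ⟨x, ?_, l.prod, ?_, by simp⟩
        · simpa using hl' x (by simp)
        · exact ⟨l, by simpa using hl, fun y hy => hl' y (by simp [hy]), rfl⟩
  refine ((Set.finite_Iic n).biUnion (fun m _ => key m)).subset ?_
  intro g hg
  simp only [Set.mem_iUnion]
  exact ⟨_, hg, hasWord_wordLength hS g⟩

theorem exists_geodesic {S : Set G} (hS : Subgroup.closure S = ⊤) (g h : G) :
    ∃ γ : ℕ → G, γ 0 = g ∧ γ (wordLength S (g⁻¹ * h)) = h ∧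
      IsGeodesic (wordDist S) (wordLength S (g⁻¹ * h)) γ := by
  obtain ⟨l, hl, hl', hp⟩ := hasWord_wordLength hS (g⁻¹ * h)
  set n := wordLength S (g⁻¹ * h) with hn
  have h0 : g * (l.take 0).prod = g := by simp
  have hend : g * (l.take n).prod = h := by
    rw [List.take_of_length_le (by omega), hp]; group
  have up : ∀ i j : ℕ, i ≤ j → j ≤ n →
      wordDist S (g * (l.take i).prod) (g * (l.take j).prod) ≤ (j : ℝ) - i := by
    intro i j hij hj
    have e : (l.take j).prod = (l.take i).prod * ((l.take j).drop i).prod := by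
      rw [← List.prod_take_mul_prod_drop (l.take j) i, List.take_take, min_eq_left hij]
    have hw : HasWord S (j - i) ((g * (l.take i).prod)⁻¹ * (g * (l.take j).prod)) := by
      refine ⟨(l.take j).drop i, ?_, ?_, ?_⟩
      · simp; omega
      · intro x hx
        exact hl' x (List.mem_of_mem_take (List.mem_of_mem_drop hx))
      · rw [e]; group
    have := hw.le
    unfold wordDist
    rw [← Nat.cast_sub hij]
    exact_mod_cast this
  have main : ∀ i j : ℕ, i ≤ j → j ≤ n →
      wordDist S (g * (l.take i).prod) (g * (l.take j).prod) = (j : ℝ) - i := by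
    intro i j hij hj
    apply le_antisymm (up i j hij hj)
    have a1 := up 0 i (by omega) (by omega)
    have a2 := up j n hj le_rfl
    rw [h0] at a1
    rw [hend] at a2
    have t1 := wordDist_tri hS g (g * (l.take i).prod) h
    have t2 := wordDist_tri hS (g * (l.take i).prod) (g * (l.take j).prod) h
    have e : wordDist S g h = n := rfl
    push_cast at a1
    linarith
  refine ⟨fun i => g * (l.take i).prod, h0, hend, ?_⟩
  intro i j hi hj
  rcases le_total i j with hij | hij
  · show wordDist S (g * (l.take i).prod) (g * (l.take j).prod) = _
    have : (i : ℝ) ≤ j := by exact_mod_cast hij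
    rw [main i j hij hj, abs_sub_comm, abs_of_nonneg (by linarith)]
  · show wordDist S (g * (l.take i).prod) (g * (l.take j).prod) = _
    have : (j : ℝ) ≤ i := by exact_mod_cast hij
    rw [wordDist_comm' hS, main j i hij hi, abs_of_nonneg (by linarith)]

theorem wordLength_map_le {A B : Type*} [Group A] [Group B] (φ : A →* B) {T : Set A} {T' : Set B}
    (hT : Subgroup.closure T = ⊤) (hT' : Subgroup.closure T' = ⊤) (N : ℕ)
    (hN : ∀ t ∈ T, wordLength T' (φ t) ≤ N) (a : A) :
    wordLength T' (φ a) ≤ N * wordLength T a := by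
  obtain ⟨l, hl, hl', hp⟩ := hasWord_wordLength hT a
  rw [← hl, ← hp]
  clear hl hp
  induction l with
  | nil => simp [wordLength_one]
  | cons x l ih =>
    have h1 := ih (fun y hy => hl' y (by simp [hy]))
    have h2 : wordLength T' (φ x) ≤ N := by
      rcases hl' x (by simp) with h | h
      · exact hN x h
      · have := hN _ h
        rwa [map_inv, wordLength_inv hT'] at this
    have h3 := wordLength_mul_le hT' (φ x) (φ l.prod)
    rw [List.prod_cons, map_mul, List.length_cons, mul_add, mul_one]
    omega

theorem crossing (V : ℕ → ℕ → Prop) (M : ℝ) (a b : ℕ) (h0 : V a 0)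
    (ex : ∀ k, a ≤ k → k ≤ b → ∃ u, V k u)
    (step : ∀ k k' u u', a ≤ k → k ≤ k' → k' ≤ k + 1 → k' ≤ b → V k u → V k' u' →
      |(u : ℝ) - u'| ≤ M) :
    ∀ k, a ≤ k → k ≤ b → ∀ u, V k u → ∀ s ≤ u,
      ∃ k', a ≤ k' ∧ k' ≤ b ∧ ∃ v, V k' v ∧ |(v : ℝ) - s| ≤ M := by
  intro k hk
  induction k, hk using Nat.le_induction with
  | base =>
    intro hb u hu s hs
    refine ⟨a, le_rfl, hb, 0, h0, ?_⟩
    have h := step a a 0 u le_rfl le_rfl (by omega) hb h0 hu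
    have hs' : (s : ℝ) ≤ u := by exact_mod_cast hs
    have hs0 : (0 : ℝ) ≤ s := by positivity
    rw [abs_le] at h ⊢
    push_cast at h ⊢
    constructor <;> linarith
  | succ k hk ih =>
    intro hb u hu s hs
    obtain ⟨u', hu'⟩ := ex k hk (by omega)
    by_cases hsu : s ≤ u'
    · exact ih (by omega) u' hu' s hsu
    · refine ⟨k, hk, by omega, u', hu', ?_⟩
      have h := step k (k + 1) u' u hk (by omega) le_rfl hb hu' hu
      have hs' : (s : ℝ) ≤ u := by exact_mod_cast hs
      have hs2 : (u' : ℝ) ≤ s := by exact_mod_cast (by omega : u' ≤ s)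
      rw [abs_le] at h ⊢
      constructor <;> linarith

/-- A geodesic of `H` maps to a quasigeodesic with the constants of the embedding. -/
theorem qg_of_geodesic {S : Set G} {H : Subgroup G} {T : Set H} {μ c : ℝ}
    (hq : ∀ h₁ h₂ : H, (1 / μ) * wordDist T h₁ h₂ - c ≤ wordDist S (h₁ : G) (h₂ : G) ∧
        wordDist S (h₁ : G) (h₂ : G) ≤ μ * wordDist T h₁ h₂ + c)
    {n : ℕ} {γ : ℕ → H} (hγ : IsGeodesic (wordDist T) n γ) :
    IsQuasigeodesic (wordDist S) μ c n (fun i => (γ i : G)) := by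
  intro i j hi hj
  have := hq (γ i) (γ j)
  rwa [hγ i j hi hj] at this

/-- The pigeonhole step. -/
theorem pigeonhole (S : Set G) (hSfin : S.Finite)
    (hSgen : Subgroup.closure S = ⊤) (H₁ H₂ : Subgroup G) (T : Set H₁) (r : ℝ) :
    ∃ R : ℕ, ∀ x : H₁, (∃ y : H₂, wordDist S (x : G) y ≤ r) →
      ∃ z : (H₁ ⊓ H₂ : Subgroup G),
        wordLength T ((Subgroup.inclusion inf_le_left z : H₁)⁻¹ * x) ≤ R := by
  classical
  have hfin := finite_ball hSfin hSgen ⌊r⌋₊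
  have hR : ∀ g : G, ∃ R : ℕ, ∀ x : H₁, (x : G) * g ∈ H₂ →
      ∃ z : (H₁ ⊓ H₂ : Subgroup G),
        wordLength T ((Subgroup.inclusion inf_le_left z : H₁)⁻¹ * x) ≤ R := by
    intro g
    by_cases h : ∃ a : H₁, (a : G) * g ∈ H₂
    · obtain ⟨a, ha⟩ := h
      refine ⟨wordLength T a, fun x hx => ?_⟩
      have hm : (x : G) * (a : G)⁻¹ ∈ H₁ ⊓ H₂ := by
        refine ⟨H₁.mul_mem x.2 (H₁.inv_mem a.2), ?_⟩
        have := H₂.mul_mem hx (H₂.inv_mem ha)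
        rwa [show (x : G) * g * ((a : G) * g)⁻¹ = (x : G) * (a : G)⁻¹ by group] at this
      refine ⟨⟨_, hm⟩, le_of_eq ?_⟩
      congr 1
      apply Subtype.ext
      simp
    · exact ⟨0, fun x hx => absurd ⟨x, hx⟩ h⟩
  choose R hR using hR
  refine ⟨hfin.toFinset.sup R, ?_⟩
  rintro x ⟨y, hy⟩
  obtain ⟨z, hz⟩ := hR ((x : G)⁻¹ * y) x (by simp)
  refine ⟨z, hz.trans (Finset.le_sup (f := R) ?_)⟩
  rw [Set.Finite.mem_toFinset]
  exact Nat.le_floor hy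

end Helpers

/-- **Intersections of stable subgroups are stable.** -/
theorem inf_isStableSubgroup {G : Type*} [Group G] (S : Set G) (hSfin : S.Finite)
    (hSgen : Subgroup.closure S = ⊤) (H₁ H₂ : Subgroup G)
    (h₁ : IsStableSubgroup S H₁) (h₂ : IsStableSubgroup S H₂) :
    IsStableSubgroup S (H₁ ⊓ H₂) := by
  obtain ⟨f₁, T₁, hT₁fin, hT₁, ⟨μ₁, c₁, hμ₁, hc₁, hq₁⟩, hs₁⟩ := h₁
  obtain ⟨f₂, T₂, hT₂fin, hT₂, ⟨μ₂, c₂, hμ₂, hc₂, hq₂⟩, hs₂⟩ := h₂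
  obtain ⟨R, hR⟩ := pigeonhole S hSfin hSgen H₁ H₂ T₁ (f₂ μ₁ c₁)
  set ι : (H₁ ⊓ H₂ : Subgroup G) →* H₁ := Subgroup.inclusion inf_le_left with hι
  have hιinj : Function.Injective ι := Subgroup.inclusion_injective _
  have hιc : ∀ h, ((ι h : H₁) : G) = (h : G) := fun h => rfl
  set N : ℕ := 2 * R + 1 with hN
  set T : Set (H₁ ⊓ H₂ : Subgroup G) := {t | wordLength T₁ (ι t) ≤ N} with hTdef
  have hTfin : T.Finite := (finite_ball hT₁fin hT₁ N).preimage hιinj.injOn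
  -- every element of the intersection is a short product of elements of `T`
  have hword : ∀ h, HasWord T (wordLength T₁ (ι h)) h := by
    intro h
    obtain ⟨γ, hγ0, hγn, hγ⟩ := exists_geodesic hT₁ 1 (ι h)
    rw [inv_one, one_mul] at hγn hγ
    set n := wordLength T₁ (ι h) with hn
    obtain ⟨δ, hδ0, hδn, hδ⟩ := exists_geodesic hT₂ 1
      (Subgroup.inclusion inf_le_right h : H₂)
    have hnear : ∀ i ≤ n, ∃ z, wordLength T₁ ((ι z)⁻¹ * γ i) ≤ R := by
      intro i hi
      apply hR
      obtain ⟨k, -, hk⟩ := (hs₂ _ δ hδ).2 μ₁ c₁ hμ₁ hc₁ n (fun i => (γ i : G))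
        (qg_of_geodesic hq₁ hγ) ⟨0, by omega, by simp [hγ0, hδ0]⟩
        ⟨_, le_rfl, by simp only [hγn, hδn]; rfl⟩ i hi
      exact ⟨δ k, hk⟩
    have hstep : ∀ i, i + 1 ≤ n → wordLength T₁ ((γ i)⁻¹ * γ (i + 1)) = 1 := by
      intro i hi
      have := hγ i (i + 1) (by omega) hi
      unfold wordDist at this
      push_cast at this
      rw [show (i : ℝ) - (i + 1) = -1 by ring, abs_neg, abs_one] at this
      exact_mod_cast this
    have hjump : ∀ i, i + 1 ≤ n → ∀ z w, wordLength T₁ ((ι z)⁻¹ * γ i) ≤ R →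
        wordLength T₁ ((ι w)⁻¹ * γ (i + 1)) ≤ R → z⁻¹ * w ∈ T := by
      intro i hi z w hz hw
      have e : ι (z⁻¹ * w) = ((ι z)⁻¹ * γ i) * (((γ i)⁻¹ * γ (i + 1)) *
          ((ι w)⁻¹ * γ (i + 1))⁻¹) := by
        rw [map_mul, map_inv]; group
      have a1 := wordLength_mul_le hT₁ ((ι z)⁻¹ * γ i) (((γ i)⁻¹ * γ (i + 1)) *
          ((ι w)⁻¹ * γ (i + 1))⁻¹)
      have a2 := wordLength_mul_le hT₁ ((γ i)⁻¹ * γ (i + 1)) ((ι w)⁻¹ * γ (i + 1))⁻¹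
      rw [wordLength_inv hT₁] at a2
      have := hstep i hi
      show wordLength T₁ (ι (z⁻¹ * w)) ≤ N
      rw [e]
      omega
    have hind : ∀ i ≤ n, ∀ z, wordLength T₁ ((ι z)⁻¹ * γ i) ≤ R → (i = 0 → z = 1) →
        HasWord T i z := by
      intro i
      induction i with
      | zero =>
        intro _ z _ hz
        rw [hz rfl]
        exact HasWord.one T
      | succ i ih =>
        intro hi z hz _
        obtain ⟨w, hw, hw0⟩ : ∃ w, wordLength T₁ ((ι w)⁻¹ * γ i) ≤ R ∧ (i = 0 → w = 1) := by
          by_cases h0 : i = 0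
          · refine ⟨1, ?_, fun _ => rfl⟩
            simp [h0, hγ0, wordLength_one]
          · obtain ⟨w, hw⟩ := hnear i (by omega)
            exact ⟨w, hw, fun h => absurd h h0⟩
        have p1 := ih (by omega) w hw hw0
        have p2 : HasWord T 1 (w⁻¹ * z) :=
          ⟨[w⁻¹ * z], rfl, by
            intro x hx
            rw [List.mem_singleton.1 hx]
            exact Or.inl (hjump i hi w z hw hz), by simp⟩
        have := p1.mul p2
        rwa [mul_inv_cancel_left] at this
    refine hind n le_rfl h ?_ ?_
    · simp [hγn, wordLength_one]
    · intro h0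
      apply hιinj
      rw [← hγn, h0, hγ0, map_one]
  have hT : Subgroup.closure T = ⊤ := by
    rw [eq_top_iff]
    intro h _
    obtain ⟨l, -, hl, rfl⟩ := hword h
    apply Subgroup.list_prod_mem
    intro x hx
    rcases hl x hx with h | h
    · exact Subgroup.subset_closure h
    · simpa using Subgroup.inv_mem _ (Subgroup.subset_closure h)
  have hle : ∀ h h', wordDist T h h' ≤ wordDist T₁ (ι h) (ι h') := by
    intro h h'
    have := (hword (h⁻¹ * h')).le
    rw [map_mul, map_inv] at this
    unfold wordDist
    exact_mod_cast this
  have hge : ∀ h h', wordDist T₁ (ι h) (ι h') ≤ N * wordDist T h h' := by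
    intro h h'
    have := wordLength_map_le ι hT hT₁ N (fun t ht => ht) (h⁻¹ * h')
    rw [map_mul, map_inv] at this
    unfold wordDist
    exact_mod_cast this
  have hN1 : (1 : ℝ) ≤ N := by exact_mod_cast (by omega : 1 ≤ N)
  set μ : ℝ := μ₁ * N with hμdef
  have hμμ : μ₁ ≤ μ := le_mul_of_one_le_right (by linarith) hN1
  have hμ : 1 ≤ μ := hμ₁.trans hμμ
  have hq : ∀ h h' : (H₁ ⊓ H₂ : Subgroup G),
      (1 / μ) * wordDist T h h' - c₁ ≤ wordDist S (h : G) (h' : G) ∧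
        wordDist S (h : G) (h' : G) ≤ μ * wordDist T h h' + c₁ := by
    intro h h'
    obtain ⟨l, u⟩ := hq₁ (ι h) (ι h')
    rw [hιc, hιc] at l u
    have hnn : 0 ≤ wordDist T h h' := Nat.cast_nonneg _
    constructor
    · have : (1 / μ) * wordDist T h h' ≤ (1 / μ₁) * wordDist T₁ (ι h) (ι h') :=
        mul_le_mul (one_div_le_one_div_of_le (by linarith) hμμ) (hle h h') hnn (by positivity)
      linarith
    · have : μ₁ * wordDist T₁ (ι h) (ι h') ≤ μ₁ * (N * wordDist T h h') :=
        mul_le_mul_of_nonneg_left (hge h h') (by linarith)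
      rw [hμdef, mul_assoc]
      linarith
  set r : ℝ := max (f₁ μ c₁) 0 with hr
  have hr0 : 0 ≤ r := le_max_right _ _
  set M : ℝ := μ₁ * (2 * r + μ + c₁ + c₁) with hM
  refine ⟨fun K ε => f₁ K ε + (μ₁ * M + c₁ + r), T, hTfin, hT, ⟨μ, c₁, hμ, hc₁, hq⟩, ?_⟩
  intro n γ hγ
  have hγq := qg_of_geodesic hq hγ
  refine ⟨⟨μ, c₁, hμ, hc₁, hγq⟩, ?_⟩
  -- geodesics of `H₁` between points of `γ` stay close to `γ`
  have key : ∀ a b : ℕ, a ≤ b → b ≤ n → ∃ (m : ℕ) (δ : ℕ → H₁),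
      (δ 0 : G) = γ a ∧ (δ m : G) = γ b ∧ IsGeodesic (wordDist T₁) m δ ∧
      ∀ s ≤ m, ∃ k ≤ n, wordDist S (δ s : G) (γ k) ≤ μ₁ * M + c₁ + r := by
    intro a b hab hb
    obtain ⟨δ, hδ0, hδm, hδ⟩ := exists_geodesic hT₁ (ι (γ a)) (ι (γ b))
    set m := wordLength T₁ ((ι (γ a))⁻¹ * ι (γ b)) with hm
    refine ⟨m, δ, by rw [hδ0, hιc], by rw [hδm, hιc], hδ, ?_⟩
    have hδq := qg_of_geodesic hq₁ hδ
    have hclose : ∀ k, a ≤ k → k ≤ b → ∃ u, u ≤ m ∧ wordDist S (γ k : G) (δ u) ≤ r := by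
      intro k hak hkb
      obtain ⟨u, hu, hd⟩ := (hs₁ m δ hδ).2 μ c₁ hμ hc₁ (b - a) (fun i => (γ (a + i) : G))
        (by
          intro i j hi hj
          have := hγq (a + i) (a + j) (by omega) (by omega)
          push_cast at this
          rwa [show (a : ℝ) + i - (a + j) = i - j by ring] at this)
        ⟨0, by omega, by simp only [hδ0, hιc, add_zero]⟩
        ⟨m, le_rfl, by simp only [hδm, hιc, Nat.add_sub_cancel' hab]⟩ (k - a) (by omega)
      simp only [Nat.add_sub_cancel' hak] at hd
      exact ⟨u, hu, hd.trans (le_max_left _ _)⟩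
    have hcross := crossing (fun k u => u ≤ m ∧ wordDist S (γ k : G) (δ u) ≤ r) M a b
      ⟨by omega, by rw [hδ0, hιc, wordDist_self]; exact hr0⟩ hclose (by
        rintro k k' u u' hak hkk hkk' hkb ⟨hu, hud⟩ ⟨hu', hud'⟩
        have q1 := (hγq k k' (by omega) (by omega)).2
        have q2 := (hδq u u' hu hu').1
        simp only at q1 q2
        have q3 : |(k : ℝ) - k'| ≤ 1 := by
          have e1 : (k : ℝ) ≤ k' := by exact_mod_cast hkk
          have e2 : (k' : ℝ) ≤ k + 1 := by exact_mod_cast hkk'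
          rw [abs_le]; constructor <;> linarith
        have q4 : μ * |(k : ℝ) - k'| ≤ μ * 1 := mul_le_mul_of_nonneg_left q3 (by linarith)
        have t1 := wordDist_tri hSgen (δ u : G) (γ k) (δ u')
        have t2 := wordDist_tri hSgen (γ k : G) (γ k') (δ u')
        rw [wordDist_comm' hSgen (δ u : G) (γ k)] at t1
        have q5 : (1 / μ₁) * |(u : ℝ) - u'| ≤ 2 * r + μ + c₁ + c₁ := by linarith
        rw [one_div, inv_mul_le_iff₀ (by linarith)] at q5
        exact q5)
    intro s hs
    obtain ⟨k, hak, hkb, v, ⟨hv, hvd⟩, hvs⟩ := hcross b hab le_rfl m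
      ⟨le_rfl, by rw [hδm, hιc, wordDist_self]; exact hr0⟩ s hs
    refine ⟨k, by omega, ?_⟩
    have q1 := (hδq v s hv hs).2
    simp only at q1
    have q2 : μ₁ * |(v : ℝ) - s| ≤ μ₁ * M := mul_le_mul_of_nonneg_left hvs (by linarith)
    have t1 := wordDist_tri hSgen (δ s : G) (δ v) (γ k)
    rw [wordDist_comm' hSgen (δ s : G) (δ v), wordDist_comm' hSgen (δ v : G) (γ k)] at t1
    linarith
  rintro K ε hK hε p η hη ⟨i, hi, hηi⟩ ⟨i', hi', hηi'⟩ j hj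
  simp only at hηi hηi'
  have hfin : ∃ (m : ℕ) (δ : ℕ → H₁), (∃ u ≤ m, η 0 = δ u) ∧ (∃ u ≤ m, η p = δ u) ∧
      IsGeodesic (wordDist T₁) m δ ∧
      ∀ s ≤ m, ∃ k ≤ n, wordDist S (δ s : G) (γ k) ≤ μ₁ * M + c₁ + r := by
    rcases le_total i i' with h | h
    · obtain ⟨m, δ, d0, dm, hδ, hd⟩ := key i i' h hi'
      exact ⟨m, δ, ⟨0, by omega, by rw [hηi, d0]⟩, ⟨m, le_rfl, by rw [hηi', dm]⟩, hδ, hd⟩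
    · obtain ⟨m, δ, d0, dm, hδ, hd⟩ := key i' i h hi
      exact ⟨m, δ, ⟨m, le_rfl, by rw [hηi, dm]⟩, ⟨0, by omega, by rw [hηi', d0]⟩, hδ, hd⟩
  obtain ⟨m, δ, e0, e1, hδ, hd⟩ := hfin
  obtain ⟨s, hs, hds⟩ := (hs₁ m δ hδ).2 K ε hK hε p η hη e0 e1 j hj
  obtain ⟨k, hk, hdk⟩ := hd s hs
  refine ⟨k, hk, ?_⟩
  have := wordDist_tri hSgen (η j) (δ s : G) (γ k)
  simp only at hds ⊢
  linarith
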